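/- arXiv:1003.1689 — 5 statements merged into one kernel-verified Lean document; each statement's English description precedes it below -/
import Mathlib

section
/- Let X be a Baire space and let Σ ⊆ X be a meagre set (a set of first Baire category). Then the complement X \ Σ, with the subspace topology, is a Baire space. -/
open Set

/-- Let `X` be a Baire space and `S ⊆ X` a meagre set (a set of first Baire
category). Then the complement `X \ S` (i.e. `Sᶜ`), with the subspace topology, is a Baire
space. -/
theorem stmt2 {X : Type*} [TopologicalSpace X] [BaireSpace X]
    (S : Set X) (hS : IsMeagre S) :
    BaireSpace ↥(Sᶜ) := by
  have hS_dense : Dense Sᶜ := dense_of_mem_residual hS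
  refine ⟨fun f ho hd ↦ ?_⟩
  choose V hV hVf using fun n ↦ isOpen_induced_iff.mp (ho n)
  have hV_dense (n : ℕ) : Dense (V n) := by
    refine (hS_dense.denseRange_val.dense_image continuous_subtype_val (hd n)).mono ?_
    rw [← hVf n]
    exact image_preimage_subset _ _
  have h_dense : Dense (Sᶜ ∩ ⋂ n, V n) :=
    dense_of_mem_residual <| Filter.inter_mem hS <|
      countable_iInter_mem.mpr fun n ↦ residual_of_dense_open (hV n) (hV_dense n)
  rw [dense_iff_inter_open]
  rintro _ ⟨U, hU, rfl⟩ ⟨x, hx⟩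
  obtain ⟨y, hyU, hyS, hyV⟩ := h_dense.inter_open_nonempty U hU ⟨x, hx⟩
  refine ⟨⟨y, hyS⟩, hyU, mem_iInter.mpr fun n ↦ ?_⟩
  rw [← hVf n]
  exact mem_iInter.mp hyV n
end

section
/- Let Ω be a nonempty open subset of ℝⁿ and let (w_λ)_{λ∈ℕ} be a sequence of continuous real-valued functions on Ω. Suppose there exists a meagre set Σ ⊆ Ω such that for every x ∈ Ω \ Σ there exists λ ∈ ℕ with w_μ(x) = 0 for all μ ≥ λ. Then there exists a closed nowhere dense set Γ ⊆ Ω such that for every x ∈ Ω \ Γ there exist λ ∈ ℕ and an open neighborhood V ⊆ Ω \ Γ of x with w_μ(y) = 0 for all y ∈ V and all μ ≥ λ. -/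
open Set

/-- `G` is a closed nowhere dense subset of `Om`: it is contained in `Om`, closed in the
subspace topology of `Om` (its closure meets `Om` only inside `G`), and has empty interior
(for `G ⊆ Om` with `Om` open, the interior relative to `Om` coincides with the interior). -/
def ClosedNwdIn {n : ℕ} (G Om : Set (Fin n → ℝ)) : Prop :=
  G ⊆ Om ∧ closure G ∩ Om ⊆ G ∧ interior G = ∅

/-- `S` is meagre (of first Baire category) in `Om`: it is contained in a countable union
of closed nowhere dense subsets of `Om`. -/
def MeagreIn {n : ℕ} (S Om : Set (Fin n → ℝ)) : Prop :=
  S ⊆ Om ∧ ∃ C : ℕ → Set (Fin n → ℝ), (∀ k, ClosedNwdIn (C k) Om) ∧ S ⊆ ⋃ k, C k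

/-- A subset of an open set `U` that is relatively closed in `U` and has empty interior is
nowhere dense in the ambient space. -/
theorem isNowhereDense_of_closure_inter_subset {X : Type*} [TopologicalSpace X] {A U : Set X}
    (hU : IsOpen U) (hAU : A ⊆ U) (hcl : closure A ∩ U ⊆ A) (hint : interior A = ∅) :
    IsNowhereDense A := by
  rw [IsNowhereDense, eq_empty_iff_forall_notMem]
  intro x hx
  obtain ⟨y, hyW, hyA⟩ :=
    mem_closure_iff.1 (interior_subset hx) _ isOpen_interior hx
  have hsub : interior (closure A) ∩ U ⊆ interior A :=
    interior_maximal ((inter_subset_inter_left _ interior_subset).trans hcl)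
      (isOpen_interior.inter hU)
  exact notMem_empty y (hint ▸ hsub ⟨hyW, hAU hyA⟩)

/-- The common zero set in `U` of a tail of a sequence of functions continuous on `U` is
relatively closed in `U`. -/
theorem closure_tailZeros_inter_subset {X : Type*} [TopologicalSpace X] {U : Set X}
    {w : ℕ → X → ℝ} (hw : ∀ l, ContinuousOn (w l) U) (l : ℕ) :
    closure {x ∈ U | ∀ m, l ≤ m → w m x = 0} ∩ U ⊆ {x ∈ U | ∀ m, l ≤ m → w m x = 0} := by
  rintro x ⟨hx, hxU⟩
  refine ⟨hxU, fun m hm => ?_⟩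
  have hmem : w m x ∈ closure ({0} : Set ℝ) :=
    ((hw m x hxU).mono (sep_subset _ _)).mem_closure hx fun y hy => hy.2 m hm
  simpa using hmem

/-- Let `Om ⊆ ℝⁿ` be nonempty open and `(w l)` a sequence of continuous
real-valued functions on `Om`. If there is a meagre set `S ⊆ Om` such that for every
`x ∈ Om \ S` there is `l` with `w m x = 0` for all `m ≥ l`, then there is a closed nowhere
dense set `G ⊆ Om` such that for every `x ∈ Om \ G` there are `l ∈ ℕ` and an open
neighborhood `V ⊆ Om \ G` of `x` with `w m y = 0` for all `y ∈ V` and all `m ≥ l`. -/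
theorem stmt3 (n : ℕ) (Om : Set (Fin n → ℝ)) (hOm : IsOpen Om) (hne : Om.Nonempty)
    (w : ℕ → (Fin n → ℝ) → ℝ) (hw : ∀ l, ContinuousOn (w l) Om)
    (h : ∃ S : Set (Fin n → ℝ), MeagreIn S Om ∧
      ∀ x ∈ Om \ S, ∃ l : ℕ, ∀ m : ℕ, l ≤ m → w m x = 0) :
    ∃ G : Set (Fin n → ℝ), ClosedNwdIn G Om ∧
      ∀ x ∈ Om \ G, ∃ (l : ℕ) (V : Set (Fin n → ℝ)),
        IsOpen V ∧ x ∈ V ∧ V ⊆ Om \ G ∧ ∀ y ∈ V, ∀ m : ℕ, l ≤ m → w m y = 0 := by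
  obtain ⟨S, ⟨-, C, hC, hSC⟩, hS⟩ := h
  let Z : ℕ → Set (Fin n → ℝ) := fun l => {x ∈ Om | ∀ m, l ≤ m → w m x = 0}
  have hopen : IsOpen (⋃ l, interior (Z l)) := isOpen_iUnion fun _ => isOpen_interior
  refine ⟨Om \ ⋃ l, interior (Z l), ⟨sdiff_subset, ?_, ?_⟩, ?_⟩
  · rintro x ⟨hx, hxO⟩
    exact ⟨hxO, closure_minimal (fun _ hy => hy.2) hopen.isClosed_compl hx⟩
  · by_contra hint
    set U := interior (Om \ ⋃ l, interior (Z l))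
    have hUO : U ⊆ Om := interior_subset.trans sdiff_subset
    have hcover : U ⊆ (⋃ k, C k) ∪ ⋃ l, Z l ∩ U := by
      intro x hx
      by_cases hxS : x ∈ S
      · exact Or.inl (hSC hxS)
      · obtain ⟨l, hl⟩ := hS x ⟨hUO hx, hxS⟩
        exact Or.inr (mem_iUnion.2 ⟨l, ⟨hUO hx, hl⟩, hx⟩)
    refine not_isMeagre_of_isOpen isOpen_interior (nonempty_iff_ne_empty.2 hint)
      (IsMeagre.mono hcover ((isMeagre_iUnion fun k => ?_).union (isMeagre_iUnion fun l => ?_)))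
    · obtain ⟨hsub, hcl, hemp⟩ := hC k
      exact (isNowhereDense_of_closure_inter_subset hOm hsub hcl hemp).isMeagre
    · refine (isNowhereDense_of_closure_inter_subset isOpen_interior inter_subset_right
        ?_ ?_).isMeagre
      · rintro x ⟨hx, hxU⟩
        exact ⟨closure_tailZeros_inter_subset hw l
          ⟨closure_mono inter_subset_left hx, hUO hxU⟩, hxU⟩
      · refine eq_empty_iff_forall_notMem.2 fun x hx => ?_
        exact (interior_subset (interior_subset hx).2).2
          (mem_iUnion.2 ⟨l, interior_mono inter_subset_left hx⟩)
  · rintro x ⟨hxO, hx⟩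
    obtain ⟨l, hl⟩ := mem_iUnion.1 (not_not.1 fun hn => hx ⟨hxO, hn⟩)
    exact ⟨l, interior (Z l), isOpen_interior, hl,
      fun y hy => ⟨(interior_subset hy).1, fun hyG => hyG.2 (mem_iUnion.2 ⟨l, hy⟩)⟩,
      fun y hy => (interior_subset hy).2⟩
end

section
/- Let Ω be a nonempty open subset of ℝⁿ. For sequences w = (w_λ)_{λ∈ℕ} of smooth real-valued functions on Ω, define: w ∈ I_nd iff there exists a closed nowhere dense set Γ ⊆ Ω such that for each x ∈ Ω \ Γ there is λ ∈ ℕ with w_μ(x) = 0 for all μ ≥ λ; and w ∈ J_{B-I} iff the same condition holds with Γ replaced by some meagre set Σ ⊆ Ω. Then J_{B-I} = I_nd. -/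
open Set

/-- In a Baire space, if a nonempty open set `V` is covered by countably many sets, then `V` meets
the interior of the closure of one of them. -/
theorem exists_inter_interior_closure_nonempty {X ι : Type*} [TopologicalSpace X] [BaireSpace X]
    [Countable ι] {V : Set X} (hV : IsOpen V) (hne : V.Nonempty) {f : ι → Set X}
    (hf : V ⊆ ⋃ i, f i) : ∃ i, (V ∩ interior (closure (f i))).Nonempty := by
  have hdense : Dense (⋃ o : Option ι, interior (o.elim Vᶜ fun i => closure (f i))) := by
    refine dense_iUnion_interior_of_closed ?_ ?_
    · rintro (_ | i)
      · exact hV.isClosed_compl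
      · exact isClosed_closure
    · refine eq_univ_of_forall fun x => mem_iUnion.2 ?_
      by_cases hx : x ∈ V
      · obtain ⟨i, hi⟩ := mem_iUnion.1 (hf hx)
        exact ⟨some i, subset_closure hi⟩
      · exact ⟨none, hx⟩
  obtain ⟨x, hxV, hx⟩ := hdense.inter_open_nonempty V hV hne
  obtain ⟨_ | i, hi⟩ := mem_iUnion.1 hx
  · exact absurd hxV (interior_subset hi)
  · exact ⟨i, x, hxV, hi⟩

/-- The set where all functions of a family continuous on `s` vanish is relatively closed in `s`. -/
theorem closure_zeros_inter_subset {X ι : Type*} [TopologicalSpace X] {s : Set X}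
    {p : ι → Prop} {w : ι → X → ℝ} (hw : ∀ i, ContinuousOn (w i) s) :
    closure {x ∈ s | ∀ i, p i → w i x = 0} ∩ s ⊆ {x ∈ s | ∀ i, p i → w i x = 0} := by
  rintro x ⟨hx, hxs⟩
  refine ⟨hxs, fun i hi => ?_⟩
  have hcont := (hw i x hxs).mono (sep_subset s fun x => ∀ i, p i → w i x = 0)
  have hmem : w i x ∈ closure ({0} : Set ℝ) := hcont.mem_closure hx fun y hy => hy.2 i hi
  simpa using hmem

theorem ClosedNwdIn.meagreIn {n : ℕ} {G Om : Set (Fin n → ℝ)} (h : ClosedNwdIn G Om) :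
    MeagreIn G Om :=
  ⟨h.1, fun _ => G, fun _ => h, subset_iUnion (fun _ : ℕ => G) 0⟩

/-- If countably many relatively closed sets `Z l` cover `Om` up to a meagre set, then the
complement of the union of their interiors is closed nowhere dense. -/
theorem MeagreIn.closedNwdIn_diff_iUnion_interior {n : ℕ} {S Om : Set (Fin n → ℝ)}
    (hS : MeagreIn S Om) {Z : ℕ → Set (Fin n → ℝ)}
    (hZ : ∀ l, closure (Z l) ∩ Om ⊆ Z l) (hcover : Om \ S ⊆ ⋃ l, Z l) :
    ClosedNwdIn (Om \ ⋃ l, interior (Z l)) Om := by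
  obtain ⟨-, C, hC, hSC⟩ := hS
  refine ⟨sdiff_subset, fun x ⟨hx, hxOm⟩ => ⟨hxOm, fun hxU => ?_⟩, ?_⟩
  · obtain ⟨y, hyU, hy⟩ := mem_closure_iff.1 hx _ (isOpen_iUnion fun l => isOpen_interior) hxU
    exact hy.2 hyU
  by_contra hne
  set V := interior (Om \ ⋃ l, interior (Z l))
  have hVO : V ⊆ Om := interior_subset.trans sdiff_subset
  have hVcover : V ⊆ ⋃ i : ℕ ⊕ ℕ, Sum.elim C Z i := by
    intro x hx
    by_cases hxS : x ∈ S
    · obtain ⟨k, hk⟩ := mem_iUnion.1 (hSC hxS)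
      exact mem_iUnion.2 ⟨.inl k, hk⟩
    · obtain ⟨l, hl⟩ := mem_iUnion.1 (hcover ⟨hVO hx, hxS⟩)
      exact mem_iUnion.2 ⟨.inr l, hl⟩
  have key : ∀ A : Set (Fin n → ℝ), closure A ∩ Om ⊆ A →
      V ∩ interior (closure A) ⊆ interior A := fun A hA =>
    interior_maximal (fun y hy => hA ⟨interior_subset hy.2, hVO hy.1⟩)
      (isOpen_interior.inter isOpen_interior)
  obtain ⟨k | l, x, hx⟩ := exists_inter_interior_closure_nonempty isOpen_interior
    (nonempty_iff_ne_empty.2 hne) hVcover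
  · exact ((hC k).2.2 ▸ key _ (hC k).2.1 hx : x ∈ (∅ : Set (Fin n → ℝ)))
  · exact (interior_subset hx.1).2 (mem_iUnion.2 ⟨l, key _ (hZ l) hx⟩)

/-- For sequences `w = (w l)` of smooth real-valued functions on a nonempty
open `Om ⊆ ℝⁿ`: `w ∈ J_{B-I}` iff there is a meagre `S ⊆ Om` with eventual pointwise vanishing
of `w` off `S`, and `w ∈ I_nd` iff the same holds with `S` replaced by a closed nowhere dense
set `G ⊆ Om`.  Then `J_{B-I} = I_nd`. -/
theorem stmt4 (n : ℕ) (Om : Set (Fin n → ℝ)) (hOm : IsOpen Om) (hne : Om.Nonempty) :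
    {w : ℕ → (Fin n → ℝ) → ℝ | (∀ l, ContDiffOn ℝ (⊤ : ℕ∞) (w l) Om) ∧
        ∃ S : Set (Fin n → ℝ), MeagreIn S Om ∧
          ∀ x ∈ Om \ S, ∃ l : ℕ, ∀ m : ℕ, l ≤ m → w m x = 0} =
    {w : ℕ → (Fin n → ℝ) → ℝ | (∀ l, ContDiffOn ℝ (⊤ : ℕ∞) (w l) Om) ∧
        ∃ G : Set (Fin n → ℝ), ClosedNwdIn G Om ∧
          ∀ x ∈ Om \ G, ∃ l : ℕ, ∀ m : ℕ, l ≤ m → w m x = 0} := by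
  ext w
  constructor
  · rintro ⟨hw, S, hS, hvanish⟩
    refine ⟨hw, _, hS.closedNwdIn_diff_iUnion_interior
      (Z := fun l => {x ∈ Om | ∀ m, l ≤ m → w m x = 0})
      (fun l => closure_zeros_inter_subset fun m => (hw m).continuousOn) ?_, ?_⟩
    · intro x hx
      obtain ⟨l, hl⟩ := hvanish x hx
      exact mem_iUnion.2 ⟨l, hx.1, hl⟩
    · rintro x ⟨hxOm, hx⟩
      obtain ⟨l, hl⟩ := mem_iUnion.1 (not_not.1 fun h => hx ⟨hxOm, h⟩)
      exact ⟨l, (interior_subset hl).2⟩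
  · rintro ⟨hw, G, hG, hvanish⟩
    exact ⟨hw, G, hG.meagreIn, hvanish⟩
end

section
/- Let Ω be a nonempty open subset of ℝⁿ and p ∈ ℕⁿ a multi-index. If a sequence w = (w_λ)_{λ∈ℕ} of smooth real-valued functions on Ω belongs to I_nd, i.e., there exists a closed nowhere dense set Γ ⊆ Ω such that for every x ∈ Ω \ Γ there is λ ∈ ℕ with w_μ(x) = 0 for all μ ≥ λ, then the componentwise partial derivative sequence D^p w = (D^p w_λ)_{λ∈ℕ} also belongs to I_nd. -/
open Set

/-- The set `I_nd` of sequences of smooth real-valued functions on `Om` that vanish eventually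
at every point outside some closed nowhere dense subset of `Om`. -/
def IndSeq (n : ℕ) (Om : Set (Fin n → ℝ)) : Set (ℕ → (Fin n → ℝ) → ℝ) :=
  {w | (∀ l, ContDiffOn ℝ (⊤ : ℕ∞) (w l) Om) ∧
    ∃ G : Set (Fin n → ℝ), ClosedNwdIn G Om ∧
      ∀ x ∈ Om \ G, ∃ l : ℕ, ∀ m : ℕ, l ≤ m → w m x = 0}

/-- The partial derivative of `f` in the `i`-th coordinate direction. -/
noncomputable def pderivI {n : ℕ} (i : Fin n) (f : (Fin n → ℝ) → ℝ) : (Fin n → ℝ) → ℝ :=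
  fun x => fderiv ℝ f x (Pi.single i 1)

/-- The partial derivative `D^p` of order given by the multi-index `p ∈ ℕⁿ`: the `i`-th
partial derivative is applied `p i` times, for each `i`. -/
noncomputable def Dmulti {n : ℕ} (p : Fin n → ℕ) (f : (Fin n → ℝ) → ℝ) : (Fin n → ℝ) → ℝ :=
  Fin.foldr n (fun i g => (pderivI i)^[p i] g) f

open Topology Filter in
/-- A sequence of continuous functions on a nonempty open subset of a Baire space that vanishes
eventually at each point vanishes eventually near some point, uniformly in the index. -/
theorem exists_eventually_forall_ge_eq_zero {X : Type*} [TopologicalSpace X] [BaireSpace X]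
    {W : Set X} (hW : IsOpen W) (hne : W.Nonempty) {f : ℕ → X → ℝ}
    (hf : ∀ l, ContinuousOn (f l) W) (h0 : ∀ x ∈ W, ∃ l : ℕ, ∀ m : ℕ, l ≤ m → f m x = 0) :
    ∃ x ∈ W, ∃ l : ℕ, ∀ᶠ y in 𝓝 x, ∀ m : ℕ, l ≤ m → f m y = 0 := by
  have : BaireSpace W := hW.baireSpace
  have : Nonempty W := hne.to_subtype
  obtain ⟨l, x, hx⟩ := nonempty_interior_of_iUnion_of_closed
    (f := fun l : ℕ => {x : W | ∀ m : ℕ, l ≤ m → f m x = 0})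
    (fun l => by
      simp only [ofPred_forall]
      exact isClosed_iInter fun m => isClosed_iInter fun _ =>
        isClosed_eq (hf m).domRestrict continuous_const)
    (by
      ext x
      simpa using h0 x x.2)
  refine ⟨x, x.2, l, ?_⟩
  have hmem := mem_interior_iff_mem_nhds.1 hx
  rw [← hW.isOpenEmbedding_subtypeVal.map_nhds_eq]
  exact hmem

/-- A single partial derivative preserves `I_nd`. -/
theorem pderivI_mem_IndSeq {n : ℕ} {Om : Set (Fin n → ℝ)} (hOm : IsOpen Om) (i : Fin n)
    {w : ℕ → (Fin n → ℝ) → ℝ} (hw : w ∈ IndSeq n Om) :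
    (fun m => pderivI i (w m)) ∈ IndSeq n Om := by
  obtain ⟨hsmooth, G, ⟨-, hGcl, hGint⟩, hG0⟩ := hw
  refine ⟨fun l => ?_, ?_⟩
  · exact ((hsmooth l).fderiv_of_isOpen hOm (by norm_cast)).clm_apply contDiffOn_const
  set V : Set (Fin n → ℝ) := {x | ∃ l : ℕ, ∀ᶠ y in nhds x, ∀ m : ℕ, l ≤ m → w m y = 0}
  have hVopen : IsOpen V := isOpen_iff_mem_nhds.2 fun x ⟨l, hl⟩ =>
    (Filter.Eventually.eventually_nhds hl).mono fun y hy => ⟨l, hy⟩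
  refine ⟨Om \ V, ⟨sdiff_subset, ?_, ?_⟩, ?_⟩
  · rintro x ⟨hx, hxOm⟩
    have hsub : closure (Om \ V) ⊆ Vᶜ := closure_minimal (fun y hy => hy.2) hVopen.isClosed_compl
    exact ⟨hxOm, hsub hx⟩
  · rw [← not_nonempty_iff_eq_empty]
    intro hne
    have hsub : interior (Om \ V) ⊆ Om \ V := interior_subset
    have hWne : (interior (Om \ V) \ closure G).Nonempty := by
      by_contra hcon
      have hcov : interior (Om \ V) ⊆ G := fun x hx =>
        hGcl ⟨by_contra fun hxG => hcon ⟨x, hx, hxG⟩, (hsub hx).1⟩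
      have := hne.mono (interior_maximal hcov isOpen_interior)
      simp [hGint] at this
    obtain ⟨x, hx, hxV⟩ := exists_eventually_forall_ge_eq_zero
      (isOpen_interior.sdiff isClosed_closure) hWne
      (fun l => (hsmooth l).continuousOn.mono fun y hy => (hsub hy.1).1)
      (fun y hy => hG0 y ⟨(hsub hy.1).1, fun hyG => hy.2 (subset_closure hyG)⟩)
    exact (hsub hx.1).2 hxV
  · rintro x ⟨hxOm, hx⟩
    obtain ⟨l, hl⟩ : x ∈ V := by_contra fun hxV => hx ⟨hxOm, hxV⟩
    refine ⟨l, fun m hm => ?_⟩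
    have heq : w m =ᶠ[nhds x] fun _ => (0 : ℝ) := hl.mono fun y hy => hy m hm
    simp [pderivI, heq.fderiv_eq]

/-- A set of sequences stable under termwise application of each `f i` is stable under termwise
application of `Fin.foldr k f`. -/
theorem foldr_mem_of_forall_mem {α : Type*} {S : Set (ℕ → α)} {k : ℕ} {f : Fin k → α → α}
    (hf : ∀ i, ∀ w ∈ S, (fun m => f i (w m)) ∈ S) {w : ℕ → α} (hw : w ∈ S) :
    (fun m => Fin.foldr k f (w m)) ∈ S := by
  induction k with
  | zero => simpa using hw
  | succ k ih =>
    simp only [Fin.foldr_succ]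
    exact hf 0 _ (ih fun i => hf i.succ)

/-- If a sequence `w` of smooth functions on `Om` belongs to `I_nd` (eventual
pointwise vanishing off some closed nowhere dense set), then for any multi-index `p ∈ ℕⁿ` the
componentwise partial derivative sequence `D^p w` also belongs to `I_nd`. -/
theorem stmt7 (n : ℕ) (Om : Set (Fin n → ℝ)) (hOm : IsOpen Om) (hne : Om.Nonempty)
    (p : Fin n → ℕ) (w : ℕ → (Fin n → ℝ) → ℝ) (hw : w ∈ IndSeq n Om) :
    (fun m => Dmulti p (w m)) ∈ IndSeq n Om := by
  refine foldr_mem_of_forall_mem (fun i v hv => ?_) hw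
  induction p i with
  | zero => exact hv
  | succ k ih =>
    simp only [Function.iterate_succ_apply']
    exact pderivI_mem_IndSeq hOm i ih
end

section
/- Let Ω be a nonempty open subset of ℝⁿ and let (w_λ)_{λ∈ℕ} be a sequence of continuous real-valued functions on Ω. The following are equivalent: (1) there exists a closed nowhere dense set Γ ⊆ Ω such that for every x ∈ Ω \ Γ there is λ ∈ ℕ with w_μ(x) = 0 for all μ ≥ λ; (2) there exists a closed nowhere dense set Γ ⊆ Ω such that for every x ∈ Ω \ Γ there exist λ ∈ ℕ and an open neighborhood V ⊆ Ω \ Γ of x with w_μ(y) = 0 for all y ∈ V and all μ ≥ λ. -/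
open Set

/-- In a Baire space, if a sequence of functions continuous on a nonempty open set `U` is
eventually zero at each point of `U`, then it is eventually zero, uniformly, on some nonempty open
subset of `U`. -/
theorem exists_isOpen_forall_eq_zero {X E : Type*} [TopologicalSpace X] [BaireSpace X]
    [TopologicalSpace E] [T1Space E] [Zero E] {U : Set X} (hU : IsOpen U) (hne : U.Nonempty)
    {w : ℕ → X → E} (hw : ∀ l, ContinuousOn (w l) U)
    (h : ∀ x ∈ U, ∃ l : ℕ, ∀ m : ℕ, l ≤ m → w m x = 0) :
    ∃ (l : ℕ) (V : Set X), IsOpen V ∧ V.Nonempty ∧ V ⊆ U ∧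
      ∀ y ∈ V, ∀ m : ℕ, l ≤ m → w m y = 0 := by
  have : BaireSpace U := hU.baireSpace
  have : Nonempty U := hne.to_subtype
  let F : ℕ → Set U := fun l => ⋂ (m : ℕ) (_ : l ≤ m), U.domRestrict (w m) ⁻¹' {0}
  have hF : ∀ l, IsClosed (F l) := fun l => isClosed_iInter fun m => isClosed_iInter fun _ =>
    isClosed_singleton.preimage (continuousOn_iff_continuous_domRestrict.1 (hw m))
  have hcover : ⋃ l, F l = univ := by
    refine eq_univ_of_forall fun x => ?_
    obtain ⟨l, hl⟩ := h x x.2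
    exact mem_iUnion.2 ⟨l, mem_iInter₂.2 hl⟩
  obtain ⟨l, hl⟩ := nonempty_interior_of_iUnion_of_closed hF hcover
  refine ⟨l, Subtype.val '' interior (F l), hU.isOpenMap_subtype_val _ isOpen_interior,
    hl.image _, Subtype.coe_image_subset _ _, ?_⟩
  rintro _ ⟨y, hy, rfl⟩ m hm
  exact mem_iInter₂.1 (interior_subset hy) m hm

/-- equivalence of pointwise and local eventual vanishing.  For a sequence
`(w l)` of continuous real-valued functions on the nonempty open set `Om ⊆ ℝⁿ`, the following
are equivalent: (1) there is a closed nowhere dense `G ⊆ Om` such that for every `x ∈ Om \ G`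
there is `l` with `w m x = 0` for all `m ≥ l`; (2) there is a closed nowhere dense `G ⊆ Om`
such that for every `x ∈ Om \ G` there are `l ∈ ℕ` and an open neighborhood `V ⊆ Om \ G` of
`x` with `w m y = 0` for all `y ∈ V` and all `m ≥ l`. -/
theorem stmt18 (n : ℕ) (Om : Set (Fin n → ℝ)) (hOm : IsOpen Om) (hne : Om.Nonempty)
    (w : ℕ → (Fin n → ℝ) → ℝ) (hw : ∀ l, ContinuousOn (w l) Om) :
    (∃ G : Set (Fin n → ℝ), ClosedNwdIn G Om ∧
        ∀ x ∈ Om \ G, ∃ l : ℕ, ∀ m : ℕ, l ≤ m → w m x = 0) ↔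
    (∃ G : Set (Fin n → ℝ), ClosedNwdIn G Om ∧
        ∀ x ∈ Om \ G, ∃ (l : ℕ) (V : Set (Fin n → ℝ)),
          IsOpen V ∧ x ∈ V ∧ V ⊆ Om \ G ∧ ∀ y ∈ V, ∀ m : ℕ, l ≤ m → w m y = 0) := by
  constructor
  · rintro ⟨G, ⟨-, hGcl, hGint⟩, hG⟩
    let D : Set (Fin n → ℝ) :=
      ⋃₀ {V | IsOpen V ∧ V ⊆ Om ∧ ∃ l : ℕ, ∀ y ∈ V, ∀ m : ℕ, l ≤ m → w m y = 0}
    have hD : IsOpen D := isOpen_sUnion fun V hV => hV.1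
    refine ⟨Om \ D, ⟨sdiff_subset, ?_, ?_⟩, ?_⟩
    · rintro x ⟨hx, hxO⟩
      exact ⟨hxO, closure_minimal (fun _ hy => hy.2) hD.isClosed_compl hx⟩
    · by_contra hint
      have hsub : interior (Om \ D) ⊆ Om \ D := interior_subset
      have hne' : (interior (Om \ D) \ closure G).Nonempty := by
        rw [sdiff_nonempty]
        intro hcl
        have hWG : interior (Om \ D) ⊆ interior G :=
          interior_maximal (fun y hy => hGcl ⟨hcl hy, (hsub hy).1⟩) isOpen_interior
        exact hint (subset_empty_iff.1 (hGint ▸ hWG))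
      have hUO : interior (Om \ D) \ closure G ⊆ Om := fun y hy => (hsub hy.1).1
      obtain ⟨l, V, hV, ⟨y, hy⟩, hVU, hVw⟩ := exists_isOpen_forall_eq_zero
        (isOpen_interior.sdiff isClosed_closure) hne' (fun l => (hw l).mono hUO)
        fun x hx => hG x ⟨hUO hx, fun hxG => hx.2 (subset_closure hxG)⟩
      exact (hsub (hVU hy).1).2 ⟨V, ⟨hV, hVU.trans hUO, l, hVw⟩, hy⟩
    · rintro x ⟨hxO, hx⟩
      obtain ⟨V, ⟨hV, hVO, l, hVw⟩, hxV⟩ : x ∈ D := by_contra fun hxD => hx ⟨hxO, hxD⟩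
      exact ⟨l, V, hV, hxV, fun y hy => ⟨hVO hy, fun hyD => hyD.2 ⟨V, ⟨hV, hVO, l, hVw⟩, hy⟩⟩, hVw⟩
  · rintro ⟨G, hG, h⟩
    refine ⟨G, hG, fun x hx => ?_⟩
    obtain ⟨l, V, -, hxV, -, hVw⟩ := h x hx
    exact ⟨l, hVw x hxV⟩
end
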